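/- arXiv:1609.06965 — 2 statements merged into one kernel-verified Lean document; each statement's English description precedes it below -/
import Mathlib

section
/- Let C be a chain complex of R-modules with bounded-below homology such that H_i(C) is a finitely generated R-module for every i. Then C admits a minimal resolution: there exist a bounded-below minimal chain complex F of finitely generated free R-modules and a quasi-isomorphism F → C. Moreover, any two minimal resolutions of C are isomorphic as chain complexes (though the isomorphism is not necessarily unique). -/
/-!
STATEMENT 1: Let `R` be a (possibly non-commutative) Noetherian local ring with maximal
ideal `m` (= the set of nonunits) and residue field `k = R/m` a field.  Let `C` be a chain
complex of `R`-modules with bounded-below homology, such that `H_i(C)` is a finitely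
generated `R`-module for every `i`.  Then `C` admits a minimal resolution: there exist a
bounded-below minimal chain complex `F` of finitely generated free `R`-modules and a
quasi-isomorphism `F → C`.  Moreover, any two minimal resolutions of `C` are isomorphic
as chain complexes (though the isomorphism is not necessarily unique).
-/

/-- The submodule `m·M` of an `R`-module `M`, for a left ideal `m` of `R`. -/
def idealSMulTop {R : Type} [Ring R] (m : Ideal R) (M : Type) [AddCommGroup M]
    [Module R M] : Submodule R M :=
  Submodule.span R {z : M | ∃ a ∈ m, ∃ y : M, z = a • y}

/-- A chain complex of `R`-modules is minimal (w.r.t. the ideal `m`) if all its boundary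
maps have image contained in `m` times the target. -/
def IsMinimalComplex {R : Type} [Ring R] (m : Ideal R)
    (F : ChainComplex (ModuleCat R) ℤ) : Prop :=
  ∀ (i j : ℤ) (x : F.X i), F.d i j x ∈ idealSMulTop m ↥(F.X j)

/-- `F` (with the chain map `f : F ⟶ C`) is a minimal resolution of `C`: `F` is a
bounded-below minimal complex of finitely generated free `R`-modules and `f` is a
quasi-isomorphism. -/
def IsMinimalResolution {R : Type} [Ring R] (m : Ideal R)
    (F C : ChainComplex (ModuleCat R) ℤ) (f : F ⟶ C) : Prop :=
  (∀ i, Module.Free R ↥(F.X i)) ∧ (∀ i, Module.Finite R ↥(F.X i)) ∧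
    IsMinimalComplex m F ∧ (∃ N : ℤ, ∀ i < N, Subsingleton ↥(F.X i)) ∧ QuasiIso f

/-!
Existence is by induction on the degree. Once `F → C` has been built up to degree `n`, the cycles
of `F` in degree `n` together with the chains of `C` bounding their images form the cycles of a
mapping cone, whose homology is an extension of a submodule of `F_n` by a quotient of `H_{n+1}(C)`,
hence finitely generated. Taking `F_{n+1}` to be a free cover of it with the fewest possible
generators makes the map `F → C` correct one degree further, and keeps every coordinate of every
relation, hence of every boundary, a nonunit.

For uniqueness, a bounded-below complex of projectives is K-projective, so two minimal resolutions
are homotopy equivalent. If `u` is homotopic to the identity of a minimal complex, then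
`u - 1 = hd + dh` takes values in the Jacobson radical, so `u` is surjective by Nakayama and
bijective because the terms are Noetherian. Applied to the two composites of the homotopy
equivalence, this shows that it is an isomorphism.
-/

open CategoryTheory

section Modules

variable {R M : Type*} [Ring R] [AddCommGroup M] [Module R M]

theorem le_ringJacobson_of_nonunits_subset {m : Ideal R} (hm : m ≠ ⊤)
    (hR : nonunits R ⊆ (m : Set R)) : m ≤ Ring.jacobson R := by
  rw [Ring.jacobson_eq_sInf_isMaximal]
  refine le_sInf fun I (hI : I.IsMaximal) ↦ ?_
  have hIm : I ≤ m := fun _ hx ↦ hR (coe_subset_nonunits hI.ne_top hx)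
  exact (hI.eq_of_le hm hIm).ge

theorem eq_top_of_sup_moduleJacobson_eq_top [Module.Finite R M] {N : Submodule R M}
    (hN : N ⊔ Module.jacobson R M = ⊤) : N = ⊤ := by
  by_contra hne
  obtain ⟨P, hP, hNP⟩ := (eq_top_or_exists_le_coatom N).resolve_left hne
  have hJP : Module.jacobson R M ≤ P := sInf_le hP
  exact hP.1 (top_le_iff.mp (hN ▸ sup_le hNP hJP))

theorem bijective_of_forall_sub_mem_moduleJacobson [IsNoetherian R M] {u : M →ₗ[R] M}
    (hu : ∀ x, u x - x ∈ Module.jacobson R M) : Function.Bijective u := by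
  refine IsNoetherian.bijective_of_surjective_endomorphism u (LinearMap.range_eq_top.mp ?_)
  refine eq_top_of_sup_moduleJacobson_eq_top (eq_top_iff.mpr fun x _ ↦ ?_)
  rw [← sub_sub_cancel (u x) x]
  exact sub_mem (Submodule.mem_sup_left ⟨x, rfl⟩) (Submodule.mem_sup_right (hu x))

theorem exists_surjective_pi_fin_of_isUnit {r : ℕ} {π : (Fin (r + 1) → R) →ₗ[R] M}
    (hπ : Function.Surjective π) {y : Fin (r + 1) → R} (hy : π y = 0) {i : Fin (r + 1)}
    (hyi : IsUnit (y i)) : ∃ π' : (Fin r → R) →ₗ[R] M, Function.Surjective π' := by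
  refine ⟨π ∘ₗ Function.ExtendByZero.linearMap R i.succAbove, fun x ↦ ?_⟩
  obtain ⟨z, rfl⟩ := hπ x
  obtain ⟨u, hu⟩ := hyi
  let z' := z - (z i * ↑u⁻¹) • y
  have hz' : Function.extend i.succAbove (z' ∘ i.succAbove) 0 = z' := by
    ext j
    obtain rfl | ⟨k, rfl⟩ := i.eq_self_or_eq_succAbove j
    · simp [z', Function.extend_apply', Fin.succAbove_ne, ← hu]
    · simp [Fin.succAbove_right_injective.extend_apply]
  refine ⟨z' ∘ i.succAbove, ?_⟩
  change π (Function.extend i.succAbove (z' ∘ i.succAbove) 0) = π z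
  simp only [hz', z', map_sub, map_smul, hy, smul_zero, sub_zero]

variable (R M) in
theorem exists_surjective_pi_fin_forall_mem_nonunits [Module.Finite R M] :
    ∃ (r : ℕ) (π : (Fin r → R) →ₗ[R] M), Function.Surjective π ∧
      ∀ y, π y = 0 → ∀ i, y i ∈ nonunits R := by
  classical
  have hex := Module.Finite.exists_fin' R M
  obtain ⟨π, hπ⟩ := Nat.find_spec hex
  have hmin := fun r ↦ Nat.find_min hex (m := r)
  generalize Nat.find hex = n at π hmin
  refine ⟨n, π, hπ, fun y hy i hyi ↦ ?_⟩
  obtain ⟨r, rfl⟩ := Nat.exists_eq_add_one.mpr i.pos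
  exact hmin r r.lt_succ_self (exists_surjective_pi_fin_of_isUnit hπ hy hyi)

end Modules

section Relative

universe u v w

variable {R : Type u} [Ring R] {S T : ShortComplex (ModuleCat.{v} R)}

variable (S) in
theorem moduleCat_finite_ker_quotient [Module.Finite R S.homology] :
    Module.Finite R (LinearMap.ker S.g.hom ⧸ LinearMap.range S.moduleCatToCycles) :=
  Module.Finite.equiv S.moduleCatHomologyIso.toLinearEquiv

theorem moduleCat_quasiIso_of_elementwise (φ : S ⟶ T)
    (hsurj : ∀ c, T.g c = 0 → ∃ x e, S.g x = 0 ∧ φ.τ₂ x = c + T.f e)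
    (hinj : ∀ x e, S.g x = 0 → φ.τ₂ x = T.f e → ∃ y, S.f y = x) :
    ShortComplex.QuasiIso φ := by
  let γ : ShortComplex.LeftHomologyMapData φ S.moduleCatLeftHomologyData
    T.moduleCatLeftHomologyData := default
  let u : LinearMap.ker S.g.hom →ₗ[R] LinearMap.ker T.g.hom := γ.φK.hom
  let v : (LinearMap.ker S.g.hom ⧸ LinearMap.range S.moduleCatToCycles) →ₗ[R]
    LinearMap.ker T.g.hom ⧸ LinearMap.range T.moduleCatToCycles := γ.φH.hom
  have hu (x : LinearMap.ker S.g.hom) : (u x).1 = φ.τ₂ x.1 := by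
    have := ConcreteCategory.congr_hom γ.commi x
    exact this
  have hv (x : LinearMap.ker S.g.hom) :
      v (Submodule.Quotient.mk x) = Submodule.Quotient.mk (u x) :=
    ConcreteCategory.congr_hom γ.commπ x
  rw [γ.quasiIso_iff, ConcreteCategory.isIso_iff_bijective]
  change Function.Bijective v
  constructor
  · rw [injective_iff_map_eq_zero]
    intro q hq
    obtain ⟨x, rfl⟩ := Submodule.Quotient.mk_surjective _ q
    obtain ⟨e, he⟩ := (Submodule.Quotient.mk_eq_zero _).mp ((hv x).symm.trans hq)
    obtain ⟨y, hy⟩ := hinj x.1 e x.2 ((hu x).symm.trans (congrArg Subtype.val he.symm))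
    exact (Submodule.Quotient.mk_eq_zero _).mpr ⟨y, Subtype.ext hy⟩
  · intro q
    obtain ⟨c, rfl⟩ := Submodule.Quotient.mk_surjective _ q
    obtain ⟨x, e, hx, hxc⟩ := hsurj c.1 c.2
    refine ⟨Submodule.Quotient.mk (⟨x, hx⟩ : LinearMap.ker S.g.hom), (hv _).trans ?_⟩
    refine (Submodule.Quotient.eq _).mpr ⟨e, Subtype.ext ?_⟩
    change T.f e = (u _).1 - c.1
    rw [hu, hxc, add_sub_cancel_left]

variable {F : Type w} [AddCommGroup F] [Module R F]

variable (S) in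
/-- The cycles of the mapping cone of `φ`, for a complex `F` that stops in the degree of `S.X₃`
and has cycles `K` there: pairs of a cycle of `F` and a chain of `S` bounding its image. -/
def relCycles (K : Submodule R F) (φ : F →ₗ[R] S.X₃) : Submodule R (F × S.X₂) :=
  K.prod ⊤ ⊓ LinearMap.eqLocus (φ ∘ₗ LinearMap.fst R F S.X₂) (S.g.hom ∘ₗ LinearMap.snd R F S.X₂)

@[simp]
theorem mem_relCycles {K : Submodule R F} {φ : F →ₗ[R] S.X₃} {p : F × S.X₂} :
    p ∈ relCycles S K φ ↔ p.1 ∈ K ∧ φ p.1 = S.g p.2 := by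
  simp [relCycles]

variable (S) in
/-- The boundaries of the mapping cone whose cycles are `relCycles S K φ`. As `F` has nothing in
the next degree, they all come from `S`. -/
def relBoundaries (K : Submodule R F) (φ : F →ₗ[R] S.X₃) : Submodule R (relCycles S K φ) :=
  ((⊥ : Submodule R F).prod (LinearMap.range S.f.hom)).submoduleOf (relCycles S K φ)

theorem mem_relBoundaries {K : Submodule R F} {φ : F →ₗ[R] S.X₃} {p : relCycles S K φ} :
    p ∈ relBoundaries S K φ ↔ p.1.1 = 0 ∧ ∃ e, S.f e = p.1.2 := by
  simp [relBoundaries, Submodule.submoduleOf, Submodule.mem_prod]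

theorem finite_relCycles_quotient_relBoundaries [IsNoetherianRing R] [Module.Finite R F]
    [Module.Finite R S.homology] (K : Submodule R F) (φ : F →ₗ[R] S.X₃) :
    Module.Finite R (relCycles S K φ ⧸ relBoundaries S K φ) := by
  have := moduleCat_finite_ker_quotient S
  let ι : LinearMap.ker S.g.hom →ₗ[R] relCycles S K φ :=
    (LinearMap.inr R F S.X₂ ∘ₗ (LinearMap.ker S.g.hom).subtype).codRestrict _ fun c ↦ by simp
  let ιbar : (LinearMap.ker S.g.hom ⧸ LinearMap.range S.moduleCatToCycles) →ₗ[R]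
      relCycles S K φ ⧸ relBoundaries S K φ :=
    Submodule.mapQ _ _ ι <| by
      rintro _ ⟨e, rfl⟩
      exact mem_relBoundaries.mpr ⟨rfl, e, rfl⟩
  let p : (relCycles S K φ ⧸ relBoundaries S K φ) →ₗ[R] F :=
    Submodule.liftQ _ (LinearMap.fst R F S.X₂ ∘ₗ (relCycles S K φ).subtype)
      fun z hz ↦ (mem_relBoundaries.mp hz).1
  have hexact : LinearMap.range ιbar = LinearMap.ker p := by
    refine le_antisymm ?_ fun q hq ↦ ?_
    · rintro _ ⟨w, rfl⟩
      obtain ⟨c, rfl⟩ := Submodule.Quotient.mk_surjective _ w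
      rfl
    · obtain ⟨⟨⟨x, c⟩, hz⟩, rfl⟩ := Submodule.Quotient.mk_surjective _ q
      obtain rfl : x = 0 := hq
      have hc : S.g c = 0 := by simpa using (mem_relCycles.mp hz).2.symm
      exact ⟨Submodule.Quotient.mk ⟨c, hc⟩, rfl⟩
  have : IsNoetherian R (relCycles S K φ ⧸ relBoundaries S K φ) :=
    isNoetherian_of_range_eq_ker ιbar p hexact
  infer_instance

/-- The maps `d` and `φ'` extend the complex `F` with cycles `K`, and its map `φ` to `S`, by one
free module, as a minimal cover of the mapping cone homology
`relCycles S K φ ⧸ relBoundaries S K φ`: `(d, φ')` takes values in the cycles, is onto modulo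
boundaries, and sends only vectors of nonunits to boundaries. -/
structure IsMinimalAttachment (S : ShortComplex (ModuleCat.{v} R)) (K : Submodule R F)
    (φ : F →ₗ[R] S.X₃) {r : ℕ} (d : (Fin r → R) →ₗ[R] F) (φ' : (Fin r → R) →ₗ[R] S.X₂) :
    Prop where
  mem_relCycles : ∀ y, (d y, φ' y) ∈ relCycles S K φ
  exists_lift : ∀ p ∈ relCycles S K φ, ∃ y e, d y = p.1 ∧ φ' y = p.2 + S.f e
  mem_nonunits : ∀ y e, d y = 0 → φ' y = S.f e → ∀ i, y i ∈ nonunits R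

variable (S) in
theorem exists_isMinimalAttachment [IsNoetherianRing R] [Module.Finite R F]
    [Module.Finite R S.homology] (K : Submodule R F) (φ : F →ₗ[R] S.X₃) :
    ∃ (r : ℕ) (d : (Fin r → R) →ₗ[R] F) (φ' : (Fin r → R) →ₗ[R] S.X₂),
      IsMinimalAttachment S K φ d φ' := by
  have := finite_relCycles_quotient_relBoundaries (S := S) K φ
  obtain ⟨r, π, hπ, hmin⟩ :=
    exists_surjective_pi_fin_forall_mem_nonunits R (relCycles S K φ ⧸ relBoundaries S K φ)
  obtain ⟨ψ, hψ⟩ := Module.projective_lifting_property (relBoundaries S K φ).mkQ π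
    (Submodule.mkQ_surjective _)
  have hψ_mk (y) : Submodule.Quotient.mk (ψ y) = π y := LinearMap.congr_fun hψ y
  refine ⟨r, LinearMap.fst R F S.X₂ ∘ₗ Submodule.subtype _ ∘ₗ ψ,
    LinearMap.snd R F S.X₂ ∘ₗ Submodule.subtype _ ∘ₗ ψ, fun y ↦ (ψ y).2, fun p hp ↦ ?_,
    fun y e hd hφ' ↦ hmin y ?_⟩
  · obtain ⟨y, hy⟩ := hπ (Submodule.Quotient.mk ⟨p, hp⟩)
    obtain ⟨hfst, e, he⟩ := mem_relBoundaries.mp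
      ((Submodule.Quotient.eq _).mp ((hψ_mk y).trans hy))
    exact ⟨y, e, sub_eq_zero.mp hfst, eq_add_of_sub_eq' he.symm⟩
  · rw [← hψ_mk, Submodule.Quotient.mk_eq_zero]
    exact mem_relBoundaries.mpr ⟨hd, e, hφ'.symm⟩

theorem isMinimalAttachment_zero [Subsingleton F] (hS : S.Exact) (K : Submodule R F)
    (φ : F →ₗ[R] S.X₃) :
    IsMinimalAttachment S K φ (0 : (Fin 0 → R) →ₗ[R] F) 0 where
  mem_relCycles _ := zero_mem _
  exists_lift p hp := by
    have hp₁ : p.1 = 0 := Subsingleton.elim _ _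
    obtain ⟨e, he⟩ := S.moduleCat_exact_iff.mp hS p.2 <| by
      rw [← (mem_relCycles.mp hp).2, hp₁, map_zero]
    exact ⟨0, -e, hp₁.symm, by simp [he]⟩
  mem_nonunits _ _ _ _ i := i.elim0

end Relative

section Existence

universe u

theorem exists_int_family_of_step {X : ℤ → Type*} (x₀ : ∀ n, X n)
    {rel : ∀ n, X n → X (n + 1) → Prop} (N : ℤ) (hlt : ∀ n < N, rel n (x₀ n) (x₀ (n + 1)))
    (hstep : ∀ n x, ∃ x', rel n x x') :
    ∃ x : ∀ n, X n, (∀ n ≤ N, x n = x₀ n) ∧ ∀ n, rel n (x n) (x (n + 1)) := by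
  choose next hnext using hstep
  let x : ∀ n, X n := fun n ↦
    Int.inductionOn' (motive := X) n N (x₀ N) (fun k _ ↦ next k) (fun k _ _ ↦ x₀ (k - 1))
  have hx : ∀ n ≤ N, x n = x₀ n := by
    intro n hn
    obtain rfl | hlt := hn.eq_or_lt
    · exact Int.inductionOn'_self ..
    · obtain ⟨k, rfl⟩ : ∃ k, n = k - 1 := ⟨n + 1, by lia⟩
      exact Int.inductionOn'_sub_one (by lia)
  refine ⟨x, hx, fun n ↦ ?_⟩
  obtain hn | hn := lt_or_ge n N
  · rw [hx n hn.le, hx (n + 1) (by lia)]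
    exact hlt n hn
  · have hsucc : x (n + 1) = next n (x n) := Int.inductionOn'_add_one hn
    rw [hsucc]
    exact hnext n (x n)

variable {R : Type u} [Ring R] {C : ChainComplex (ModuleCat.{u} R) ℤ}

variable (C) in
/-- The data in degree `n` of a free complex over `C` that has been built up to degree `n`: the
free module in degree `n`, its map to `C`, and its submodule of cycles. -/
structure ResolutionStage (n : ℤ) where
  rank : ℕ
  aug : (Fin rank → R) →ₗ[R] C.X n
  cycles : Submodule R (Fin rank → R)

variable (C) in
/-- A free complex over `C`, presented as a family of stages in which every stage is attached
minimally to the cycles of the previous one. -/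
structure MinimalTower where
  stage : ∀ n, ResolutionStage C n
  d : ∀ n, (Fin (stage (n + 1)).rank → R) →ₗ[R] Fin (stage n).rank → R
  cycles_succ : ∀ n, (stage (n + 1)).cycles = LinearMap.ker (d n)
  isMinimalAttachment : ∀ n, IsMinimalAttachment (C.sc' (n + 1 + 1) (n + 1) n)
    (stage n).cycles (stage n).aug (d n) (stage (n + 1)).aug

variable (C) in
/-- The identification of `H_{n+1}(C)` with the homology of `C_{n+2} → C_{n+1} → C_n`. -/
noncomputable def homologySuccIso (n : ℤ) :
    C.homology (n + 1) ≅ (C.sc' (n + 1 + 1) (n + 1) n).homology :=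
  ShortComplex.homologyMapIso (C.isoSc' (n + 1 + 1) (n + 1) n (by simp) (by simp))

theorem exists_minimalTower [IsNoetherianRing R] (N : ℤ)
    (hbdd : ∀ i < N, Subsingleton (C.homology i)) (hfg : ∀ i, Module.Finite R (C.homology i)) :
    ∃ t : MinimalTower C, ∀ i < N, (t.stage i).rank = 0 := by
  let attached (n : ℤ) (s : ResolutionStage C n) (s' : ResolutionStage C (n + 1)) : Prop :=
    ∃ d, s'.cycles = LinearMap.ker d ∧
      IsMinimalAttachment (C.sc' (n + 1 + 1) (n + 1) n) s.cycles s.aug d s'.aug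
  have attached_zero : ∀ n < N - 1, attached n ⟨0, 0, ⊥⟩ ⟨0, 0, ⊥⟩ := by
    intro n hn
    have := hbdd (n + 1) (by lia)
    have hexact : (C.sc' (n + 1 + 1) (n + 1) n).Exact :=
      (ShortComplex.exact_iff_isZero_homology _).mpr
        ((ModuleCat.isZero_of_subsingleton _).of_iso (homologySuccIso C n).symm)
    exact ⟨0, Subsingleton.elim _ _, isMinimalAttachment_zero hexact _ _⟩
  have exists_attached : ∀ n s, ∃ s', attached n s s' := by
    intro n s
    have : Module.Finite R (C.sc' (n + 1 + 1) (n + 1) n).homology :=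
      Module.Finite.equiv (homologySuccIso C n).toLinearEquiv
    obtain ⟨r, d, φ', h⟩ :=
      exists_isMinimalAttachment (C.sc' (n + 1 + 1) (n + 1) n) s.cycles s.aug
    exact ⟨⟨r, φ', LinearMap.ker d⟩, d, rfl, h⟩
  obtain ⟨stage, hlow, hattached⟩ :=
    exists_int_family_of_step (fun n ↦ ⟨0, 0, ⊥⟩) (N - 1) attached_zero exists_attached
  choose d hcycles hd using hattached
  exact ⟨⟨stage, d, hcycles, hd⟩, fun i hi ↦ congrArg ResolutionStage.rank (hlow i (by lia))⟩

namespace MinimalTower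

variable (t : MinimalTower C)

theorem d_mem_cycles (n : ℤ) (y) : t.d n y ∈ (t.stage n).cycles :=
  (mem_relCycles.mp ((t.isMinimalAttachment n).mem_relCycles y)).1

theorem aug_d (n : ℤ) (y) : (t.stage n).aug (t.d n y) = C.d (n + 1) n ((t.stage (n + 1)).aug y) :=
  (mem_relCycles.mp ((t.isMinimalAttachment n).mem_relCycles y)).2

theorem d_comp_d (n : ℤ) : t.d n ∘ₗ t.d (n + 1) = 0 :=
  LinearMap.range_le_ker_iff.mp <| by
    rintro _ ⟨y, rfl⟩
    rw [← t.cycles_succ]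
    exact t.d_mem_cycles (n + 1) y

/-- The complex of free modules underlying a tower. -/
noncomputable def complex : ChainComplex (ModuleCat.{u} R) ℤ :=
  ChainComplex.of (fun n ↦ ModuleCat.of R (Fin (t.stage n).rank → R))
    (fun n ↦ ModuleCat.ofHom (t.d n)) fun n ↦ by
      rw [← ModuleCat.ofHom_comp, d_comp_d, ModuleCat.ofHom_zero]

theorem complex_d (n : ℤ) : t.complex.d (n + 1) n = ModuleCat.ofHom (t.d n) :=
  ChainComplex.of_d (fun n ↦ ModuleCat.of R (Fin (t.stage n).rank → R))
    (fun n ↦ ModuleCat.ofHom (t.d n)) n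

/-- The chain map to `C` carried by a tower. -/
noncomputable def augmentation : t.complex ⟶ C :=
  ChainComplex.ofHom (fun n ↦ ModuleCat.ofHom (t.stage n).aug) fun n ↦ by
    rw [complex_d]
    ext1
    exact LinearMap.ext fun y ↦ (t.aug_d n y).symm

theorem d_mem_nonunits (n : ℤ) (y) (i) : t.d n y i ∈ nonunits R := by
  obtain ⟨k, rfl⟩ : ∃ k, n = k + 1 := ⟨n - 1, by lia⟩
  exact (t.isMinimalAttachment k).mem_nonunits _ ((t.stage (k + 1 + 1)).aug y)
    (LinearMap.congr_fun (t.d_comp_d k) y) (t.aug_d (k + 1) y) i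

theorem quasiIso_augmentation : QuasiIso t.augmentation where
  quasiIsoAt i := by
    obtain ⟨n, rfl⟩ : ∃ n, i = n + 1 := ⟨i - 1, by lia⟩
    rw [quasiIsoAt_iff' t.augmentation (n + 1 + 1) (n + 1) n (by simp) (by simp)]
    refine moduleCat_quasiIso_of_elementwise _ (fun c hc ↦ ?_) fun x e hx hxe ↦ ?_
    · obtain ⟨y, e, hy, hye⟩ := (t.isMinimalAttachment n).exists_lift (0, c)
        (mem_relCycles.mpr ⟨zero_mem _, (map_zero _).trans hc.symm⟩)
      exact ⟨y, e, (ConcreteCategory.congr_hom (t.complex_d n) y).trans hy, hye⟩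
    · have hx : t.d n x = 0 := (ConcreteCategory.congr_hom (t.complex_d n) x).symm.trans hx
      obtain ⟨y, -, hy, -⟩ := (t.isMinimalAttachment (n + 1)).exists_lift (x, e)
        (mem_relCycles.mpr ⟨by rw [t.cycles_succ]; exact hx, hxe⟩)
      exact ⟨y, (ConcreteCategory.congr_hom (t.complex_d (n + 1)) y).trans hy⟩

end MinimalTower

end Existence

section Uniqueness

universe u v

section Abelian

variable {A : Type u} [Category.{v} A] [Abelian A]

instance quasiIso_cochainComplexEquivalence_map {K L : ChainComplex A ℤ} (f : K ⟶ L)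
    [QuasiIso f] : QuasiIso ((ChainComplex.cochainComplexEquivalence A).functor.map f) where
  quasiIsoAt i := by
    have hf : QuasiIsoAt f (-i) := inferInstance
    rw [quasiIsoAt_iff' f (-(i - 1)) (-i) (-(i + 1)) (by simp; ring) (by simp; ring)] at hf
    rwa [quasiIsoAt_iff' _ (i - 1) i (i + 1) (by simp) (by simp)]

theorem isKProjective_cochainComplexEquivalence_obj (K : ChainComplex A ℤ)
    [hK : ∀ i, Projective (K.X i)] {N : ℤ} (hN : ∀ i < N, Limits.IsZero (K.X i)) :
    ((ChainComplex.cochainComplexEquivalence A).functor.obj K).IsKProjective := by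
  have : ((ChainComplex.cochainComplexEquivalence A).functor.obj K).IsStrictlyLE (-N) :=
    (CochainComplex.isStrictlyLE_iff _ _).mpr fun i hi ↦ hN (-i) (by lia)
  have (i : ℤ) : Projective (((ChainComplex.cochainComplexEquivalence A).functor.obj K).X i) :=
    hK (-i)
  exact CochainComplex.isKProjective_of_projective _ (-N)

open DerivedCategory HomologicalComplex in
theorem nonempty_homotopyEquiv_of_isKProjective {K L C : CochainComplex A ℤ} [K.IsKProjective]
    [L.IsKProjective] (f : K ⟶ C) (g : L ⟶ C) [QuasiIso f] [QuasiIso g] :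
    Nonempty (HomotopyEquiv K L) := by
  let := HasDerivedCategory.standard A
  obtain ⟨ubar, hubar⟩ := (CochainComplex.IsKProjective.Qh_map_bijective K
    ((HomotopyCategory.quotient _ _).obj L)).surjective
    ((quotientCompQhIso A).hom.app K ≫ Q.map f ≫ inv (Q.map g) ≫ (quotientCompQhIso A).inv.app L)
  obtain ⟨u, rfl⟩ := (HomotopyCategory.quotient _ _).map_surjective ubar
  have hQh : IsIso (Qh.map ((HomotopyCategory.quotient A (.up ℤ)).map u)) := by
    rw [hubar]
    infer_instance
  have hQ : IsIso (Q.map u) := (NatIso.isIso_map_iff (quotientCompQhIso A) u).mp hQh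
  have hu : QuasiIso u := (isIso_Q_map_iff_quasiIso A u).mp hQ
  obtain ⟨e, -⟩ := (CochainComplex.IsKProjective.quasiIso_iff u).mp hu
  exact ⟨e⟩

end Abelian

variable {R : Type u} [Ring R]

section Radical

variable {ι : Type*} {c : ComplexShape ι} {K L : HomologicalComplex (ModuleCat.{v} R) c}

theorem isIso_of_homotopy_id [∀ i, IsNoetherian R (K.X i)]
    (hK : ∀ i j x, K.d i j x ∈ Module.jacobson R (K.X j)) {u : K ⟶ K} (h : Homotopy u (𝟙 K)) :
    IsIso u := by
  have (i : ι) : IsIso (u.f i) := by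
    rw [ConcreteCategory.isIso_iff_bijective]
    refine bijective_of_forall_sub_mem_moduleJacobson (u := (u.f i).hom) fun x ↦ ?_
    have hux : u.f i x = h.hom (c.next i) i (K.d i (c.next i) x) +
        K.d (c.prev i) i (h.hom i (c.prev i) x) + x := ConcreteCategory.congr_hom (h.comm i) x
    change u.f i x - x ∈ _
    rw [hux, add_sub_cancel_right]
    exact add_mem (Module.le_comap_jacobson (h.hom (c.next i) i).hom (hK _ _ x)) (hK _ _ _)
  exact HomologicalComplex.Hom.isIso_of_components u

theorem isIso_homotopyEquiv_hom [∀ i, IsNoetherian R (K.X i)] [∀ i, IsNoetherian R (L.X i)]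
    (hK : ∀ i j x, K.d i j x ∈ Module.jacobson R (K.X j))
    (hL : ∀ i j x, L.d i j x ∈ Module.jacobson R (L.X j)) (e : HomotopyEquiv K L) :
    IsIso e.hom := by
  have := isIso_of_homotopy_id hK e.homotopyHomInvId
  have := isIso_of_homotopy_id hL e.homotopyInvHomId
  have := mono_of_mono e.hom e.inv
  have := epi_of_epi e.inv e.hom
  exact isIso_of_mono_of_epi e.hom

end Radical

/-- A bounded-below complex of Noetherian projective modules whose differentials take values in
the Jacobson radicals of the terms. This is the form in which minimality enters the uniqueness
argument. -/
structure IsRadicalProjectiveComplex (F : ChainComplex (ModuleCat.{v} R) ℤ) : Prop where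
  projective : ∀ i, Projective (F.X i)
  isNoetherian : ∀ i, IsNoetherian R (F.X i)
  d_mem_jacobson : ∀ i j x, F.d i j x ∈ Module.jacobson R (F.X j)
  exists_isZero : ∃ N : ℤ, ∀ i < N, Limits.IsZero (F.X i)

theorem IsRadicalProjectiveComplex.nonempty_iso {F F' C : ChainComplex (ModuleCat.{v} R) ℤ}
    (hF : IsRadicalProjectiveComplex F) (hF' : IsRadicalProjectiveComplex F')
    (f : F ⟶ C) (f' : F' ⟶ C) [QuasiIso f] [QuasiIso f'] : Nonempty (F ≅ F') := by
  let Φ := (ChainComplex.cochainComplexEquivalence (ModuleCat.{v} R)).functor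
  have hproj {G : ChainComplex (ModuleCat.{v} R) ℤ} (hG : IsRadicalProjectiveComplex G) :
      (Φ.obj G).IsKProjective := by
    obtain ⟨N, hN⟩ := hG.exists_isZero
    have := hG.projective
    exact isKProjective_cochainComplexEquivalence_obj G hN
  have := hproj hF
  have := hproj hF'
  obtain ⟨e⟩ := nonempty_homotopyEquiv_of_isKProjective (Φ.map f) (Φ.map f')
  have (i : ℤ) : IsNoetherian R ((Φ.obj F).X i) := hF.isNoetherian (-i)
  have (i : ℤ) : IsNoetherian R ((Φ.obj F').X i) := hF'.isNoetherian (-i)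
  have : IsIso e.hom := isIso_homotopyEquiv_hom (fun i j ↦ hF.d_mem_jacobson (-i) (-j))
    (fun i j ↦ hF'.d_mem_jacobson (-i) (-j)) e
  exact ⟨Φ.preimageIso (asIso e.hom)⟩

end Uniqueness

section MinimalResolution

variable {R : Type} [Ring R] {m : Ideal R}

theorem mem_idealSMulTop_of_forall_mem {r : ℕ} {x : Fin r → R} (hx : ∀ i, x i ∈ m) :
    x ∈ idealSMulTop m (Fin r → R) := by
  rw [pi_eq_sum_univ' x]
  exact sum_mem fun i _ ↦ Submodule.subset_span ⟨x i, hx i, _, rfl⟩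

theorem MinimalTower.isMinimalComplex_complex {C : ChainComplex (ModuleCat R) ℤ}
    (t : MinimalTower C) (hm : nonunits R ⊆ (m : Set R)) : IsMinimalComplex m t.complex := by
  intro i j x
  by_cases hij : j + 1 = i
  · subst hij
    rw [complex_d]
    exact mem_idealSMulTop_of_forall_mem fun k ↦ hm (t.d_mem_nonunits j x k)
  · rw [t.complex.shape i j hij]
    exact zero_mem _

theorem exists_isMinimalResolution [IsNoetherianRing R] (hm : nonunits R ⊆ (m : Set R))
    {C : ChainComplex (ModuleCat R) ℤ} (hbdd : ∃ N : ℤ, ∀ i < N, Subsingleton (C.homology i))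
    (hfg : ∀ i, Module.Finite R (C.homology i)) :
    ∃ (F : ChainComplex (ModuleCat R) ℤ) (f : F ⟶ C), IsMinimalResolution m F C f := by
  obtain ⟨N, hN⟩ := hbdd
  obtain ⟨t, hrank⟩ := exists_minimalTower N hN hfg
  refine ⟨t.complex, t.augmentation, fun i ↦ ?_, fun i ↦ ?_, t.isMinimalComplex_complex hm,
    ⟨N, fun i hi ↦ ?_⟩, t.quasiIso_augmentation⟩
  · exact inferInstanceAs (Module.Free R (Fin (t.stage i).rank → R))
  · exact inferInstanceAs (Module.Finite R (Fin (t.stage i).rank → R))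
  · change Subsingleton (Fin (t.stage i).rank → R)
    rw [hrank i hi]
    infer_instance

theorem idealSMulTop_le_moduleJacobson (hm : m ≤ Ring.jacobson R) (M : Type) [AddCommGroup M]
    [Module R M] : idealSMulTop m M ≤ Module.jacobson R M := by
  refine Submodule.span_le.mpr ?_
  rintro _ ⟨a, ha, y, rfl⟩
  exact Ring.jacobson_smul_top_le R M (Submodule.smul_mem_smul (hm ha) Submodule.mem_top)

theorem IsMinimalResolution.isRadicalProjectiveComplex [IsNoetherianRing R]
    (hm : m ≤ Ring.jacobson R) {F C : ChainComplex (ModuleCat R) ℤ} {f : F ⟶ C}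
    (h : IsMinimalResolution m F C f) : IsRadicalProjectiveComplex F := by
  obtain ⟨hfree, hfin, hmin, ⟨N, hN⟩, -⟩ := h
  refine ⟨fun i ↦ ?_, fun i ↦ ?_, fun i j x ↦ idealSMulTop_le_moduleJacobson hm _ (hmin i j x),
    N, fun i hi ↦ ?_⟩
  · infer_instance
  · exact isNoetherian_of_isNoetherianRing_of_finite R (F.X i)
  · have := hN i hi
    exact ModuleCat.isZero_of_subsingleton _

end MinimalResolution

theorem stmt_1
    (R : Type) [Ring R] [IsNoetherianRing R] [Nontrivial R]
    (m : Ideal R) (hloc : ∀ x : R, x ∈ m ↔ x ∈ nonunits R)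
    (C : ChainComplex (ModuleCat R) ℤ)
    (hbdd : ∃ N : ℤ, ∀ i < N, Subsingleton ↥(C.homology i))
    (hfg : ∀ i : ℤ, Module.Finite R ↥(C.homology i)) :
    -- existence of a minimal resolution
    (∃ (F : ChainComplex (ModuleCat R) ℤ) (f : F ⟶ C), IsMinimalResolution m F C f) ∧
    -- uniqueness (up to isomorphism) of minimal resolutions
    (∀ (F F' : ChainComplex (ModuleCat R) ℤ) (f : F ⟶ C) (f' : F' ⟶ C),
      IsMinimalResolution m F C f → IsMinimalResolution m F' C f' →
      Nonempty (F ≅ F')) := by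
  have hunits : nonunits R ⊆ (m : Set R) := fun x ↦ (hloc x).mpr
  have hm : m ≠ ⊤ := (Ideal.ne_top_iff_one m).mpr fun h ↦ (hloc 1).mp h isUnit_one
  have hrad : m ≤ Ring.jacobson R := le_ringJacobson_of_nonunits_subset hm hunits
  refine ⟨exists_isMinimalResolution hunits hbdd hfg, fun F F' f f' hf hf' ↦ ?_⟩
  have : QuasiIso f := hf.2.2.2.2
  have : QuasiIso f' := hf'.2.2.2.2
  exact (hf.isRadicalProjectiveComplex hrad).nonempty_iso (hf'.isRadicalProjectiveComplex hrad) f f'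
end

section
/- Let (C(i))_{i∈I} be a family of chain complexes of flat left B-modules. Then the termwise product ∏_{i∈I} C(i) is a chain complex of flat left B_I-modules, and for every prime ideal x of A_I the ultraproduct C(∞) := A_{I,x} ⊗_{A_I} ∏_{i∈I} C(i) is a chain complex of flat left B-modules, where the B-module structure comes from the canonical isomorphism A_{I,x} ⊗_{A_I} B_I ≅ B. -/
/-!
STATEMENT 6: Fix a prime `p`, a finite commutative local ring `A` of characteristic `p`,
and a (possibly non-commutative) finite `A`-algebra `B`.  Let `(C(i))_{i∈I}` be a family of
chain complexes of flat left `B`-modules.  Then the termwise product `∏_{i∈I} C(i)` is a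
chain complex of flat left `B_I`-modules, and for every prime ideal `x` of `A_I` the
ultraproduct `C(∞) := A_{I,x} ⊗_{A_I} ∏_{i∈I} C(i)` is a chain complex of flat left
`B`-modules, where the `B`-module structure comes from the canonical isomorphism
`A_{I,x} ⊗_{A_I} B_I ≅ B` (equivalently, it is characterized on pure tensors by
`b • (z ⊗ m) = z ⊗ (i ↦ b • m i)`; we quantify over all incarnations of `C(∞)_n` as a
`B`-module with this property).
-/

open scoped TensorProduct

/-- Flatness of a left module over a possibly non-commutative ring, via the equational
criterion: every finite relation is a consequence of relations in the ring. -/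
def ModuleFlat (B M : Type) [Ring B] [AddCommGroup M] [Module B M] : Prop :=
  ∀ (n : ℕ) (b : Fin n → B) (m : Fin n → M), (∑ j, b j • m j) = 0 →
    ∃ (κ : ℕ) (c : Fin n → Fin κ → B) (y : Fin κ → M),
      (∀ l, (∑ j, b j * c j l) = 0) ∧ (∀ j, m j = ∑ l, c j l • y l)

/-- The canonical ring homomorphism `∏ A →+* ∏ B` induced componentwise by
`algebraMap A B`. -/
def piAlgRingHom (A B : Type) [CommRing A] [Ring B] [Algebra A B] (I : Type) :
    (I → A) →+* (I → B) :=
  Pi.ringHom fun i => (algebraMap A B).comp (Pi.evalRingHom (fun _ : I => A) i)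

/-- A product of left `B`-modules, regarded as a module over `∏ A` via the componentwise
action through `algebraMap A B`. -/
noncomputable def piAModule (A B : Type) [CommRing A] [Ring B] [Algebra A B] (I : Type)
    (M : I → Type) [∀ i, AddCommGroup (M i)] [∀ i, Module B (M i)] :
    Module (I → A) (∀ i, M i) :=
  Module.compHom _ (piAlgRingHom A B I)

/-!
Fix `b : Fin n → B`. The `c` with `∑ j, b j * c j = 0` form a right `B`-module; once generators of
it are known, a flat module solves every relation `∑ j, b j • m j = 0` with those generators as
coefficients. For a family of relations, in modules `M i`, the solutions can therefore be assembled
into one in `∏ i, M i` as soon as the number of generators does not depend on `i`. Over a finite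
ring `B` it can be chosen so, because `Bⁿ` has only finitely many elements. This handles the
product both over `∏ i, B` and over `B` acting diagonally. Finally, the ultraproduct is a
localization of the product at scalars commuting with `B`, and clearing denominators shows that
such a localization preserves flatness over `B`.
-/

/-- The columns of `c` generate the right `B`-module of relations `v` with `∑ j, b j * v j = 0`. -/
structure GeneratesRelations {B : Type*} [Ring B] {n κ : ℕ} (b : Fin n → B)
    (c : Fin n → Fin κ → B) : Prop where
  sum_mul_eq_zero : ∀ l, ∑ j, b j * c j l = 0
  exists_eq_sum : ∀ v : Fin n → B, ∑ j, b j * v j = 0 →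
    ∃ a : Fin κ → B, ∀ j, v j = ∑ l, c j l * a l

/-- Right coherence: the kernel of every right-linear map `Bⁿ → B` is finitely generated. -/
def IsRightCoherent (B : Type*) [Ring B] : Prop :=
  ∀ (n : ℕ) (b : Fin n → B), ∃ (κ : ℕ) (c : Fin n → Fin κ → B), GeneratesRelations b c

/-- Uniform right coherence (after Soublin): the kernels of the right-linear maps `Bⁿ → B` are
generated by a number of elements bounded in terms of `n` alone. Generators may be repeated, so the
bound is encoded as an exact number. -/
def IsUniformlyRightCoherent (B : Type*) [Ring B] : Prop :=
  ∀ n : ℕ, ∃ κ : ℕ, ∀ b : Fin n → B, ∃ c : Fin n → Fin κ → B, GeneratesRelations b c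

theorem IsUniformlyRightCoherent.isRightCoherent {B : Type*} [Ring B]
    (hB : IsUniformlyRightCoherent B) : IsRightCoherent B :=
  fun n b => (hB n).imp fun _ h => h b

theorem IsUniformlyRightCoherent.of_finite (B : Type*) [Ring B] [Finite B] :
    IsUniformlyRightCoherent B := by
  intro n
  obtain ⟨κ, ⟨e⟩⟩ := Finite.exists_equiv_fin (Fin n → B)
  refine ⟨κ, fun b => ?_⟩
  let Relations := {v : Fin n → B // ∑ j, b j * v j = 0}
  have : Nonempty Relations := ⟨⟨0, by simp⟩⟩
  obtain ⟨g, hg⟩ : ∃ g : Fin κ → Relations, Function.Surjective g :=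
    ⟨_, Function.invFun_surjective (e.injective.comp Subtype.val_injective)⟩
  refine ⟨fun j l => (g l).1 j, fun l => (g l).2, fun v hv => ?_⟩
  obtain ⟨l, hl⟩ := hg ⟨v, hv⟩
  exact ⟨Pi.single l 1, fun j => by simp [Pi.single_apply, hl]⟩

namespace ModuleFlat

theorem exists_eq_sum_of_generatesRelations {B M : Type} [Ring B] [AddCommGroup M] [Module B M]
    (hM : ModuleFlat B M) {n κ : ℕ} {b : Fin n → B} {c : Fin n → Fin κ → B}
    (hc : GeneratesRelations b c) {m : Fin n → M} (hm : ∑ j, b j • m j = 0) :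
    ∃ y : Fin κ → M, ∀ j, m j = ∑ l, c j l • y l := by
  obtain ⟨r, d, z, hd, hz⟩ := hM n b m hm
  choose a ha using fun k => hc.exists_eq_sum (fun j => d j k) (hd k)
  refine ⟨fun l => ∑ k, a k l • z k, fun j => ?_⟩
  calc m j = ∑ k, ∑ l, (c j l * a k l) • z k := by simp only [hz j, ha, Finset.sum_smul]
    _ = ∑ l, c j l • ∑ k, a k l • z k := by
      rw [Finset.sum_comm]
      simp only [Finset.smul_sum, mul_smul]

section Pi

variable {B : Type} [Ring B]

theorem exists_pi_eq_sum_of_generatesRelations {I : Type*} {M : I → Type}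
    [∀ i, AddCommGroup (M i)] [∀ i, Module B (M i)] (hM : ∀ i, ModuleFlat B (M i)) {n κ : ℕ}
    {b : I → Fin n → B} {c : I → Fin n → Fin κ → B} (hc : ∀ i, GeneratesRelations (b i) (c i))
    {m : Fin n → ∀ i, M i} (hm : ∀ i, ∑ j, b i j • m j i = 0) :
    ∃ y : Fin κ → ∀ i, M i, ∀ j i, m j i = ∑ l, c i j l • y l i := by
  choose y hy using fun i => (hM i).exists_eq_sum_of_generatesRelations (hc i) (hm i)
  exact ⟨fun l i => y i l, fun j i => hy i j⟩

variable {I : Type} {M : I → Type} [∀ i, AddCommGroup (M i)] [∀ i, Module B (M i)]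

theorem pi (hB : IsUniformlyRightCoherent B) (hM : ∀ i, ModuleFlat B (M i)) :
    ModuleFlat (I → B) (∀ i, M i) := by
  intro n b m hm
  obtain ⟨κ, hκ⟩ := hB n
  choose c hc using fun i => hκ fun j => b j i
  have relation (i : I) : ∑ j, b j i • m j i = 0 := by simpa using congrFun hm i
  obtain ⟨y, hy⟩ := exists_pi_eq_sum_of_generatesRelations hM hc relation
  refine ⟨κ, fun j l i => c i j l, y, fun l => ?_, fun j => ?_⟩
  · ext i
    simpa using (hc i).sum_mul_eq_zero l
  · ext i
    simpa using hy j i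

/-- One half of Chase's theorem. -/
theorem pi_diagonal (hB : IsRightCoherent B) (hM : ∀ i, ModuleFlat B (M i)) :
    ModuleFlat B (∀ i, M i) := by
  intro n b m hm
  obtain ⟨κ, c, hc⟩ := hB n b
  have relation (i : I) : ∑ j, b j • m j i = 0 := by simpa using congrFun hm i
  obtain ⟨y, hy⟩ := exists_pi_eq_sum_of_generatesRelations hM (fun _ => hc) relation
  refine ⟨κ, c, y, hc.sum_mul_eq_zero, fun j => ?_⟩
  ext i
  simpa using hy j i

end Pi

section Localization

variable {R : Type*} [CommRing R] (S : Submonoid R) {B P N : Type} [Ring B]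
  [AddCommGroup P] [Module R P] [Module B P] [SMulCommClass R B P]
  [AddCommGroup N] [Module B N]

theorem of_isLocalizedModule [Module R N] [SMulCommClass R B N] (f : P →ₗ[R] N)
    [IsLocalizedModule S f] (hf : ∀ (b : B) (v : P), f (b • v) = b • f v)
    (hP : ModuleFlat B P) : ModuleFlat B N := by
  intro n b m hm
  obtain ⟨s, hs⟩ := IsLocalizedModule.exist_integer_multiples_of_finite S f m
  choose w hw using hs
  have map_relation : f (∑ j, b j • w j) = 0 := by
    simp only [map_sum, hf, hw, ← smul_comm (s : R), ← Finset.smul_sum, hm, smul_zero]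
  obtain ⟨t, ht⟩ := (IsLocalizedModule.eq_zero_iff S f).mp map_relation
  have relation : ∑ j, b j • (t : R) • w j = 0 := by
    simpa only [Submonoid.smul_def, Finset.smul_sum, smul_comm (t : R)] using ht
  obtain ⟨κ, c, y, hc, hy⟩ := hP n b _ relation
  refine ⟨κ, c, fun l => IsLocalizedModule.mk' f (y l) (t * s), hc, fun j => ?_⟩
  apply IsLocalizedModule.smul_injective f (t * s)
  calc (t * s) • m j = f ((t : R) • w j) := by
        rw [map_smul, hw, mul_smul, Submonoid.smul_def, Submonoid.smul_def]
    _ = ∑ l, c j l • f (y l) := by simp only [hy, map_sum, hf]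
    _ = (t * s) • ∑ l, c j l • IsLocalizedModule.mk' f (y l) (t * s) := by
        simp only [← IsLocalizedModule.mk'_cancel' f _ (t * s), Submonoid.smul_def,
          Finset.smul_sum, smul_comm ((t * s : S) : R)]

theorem of_addEquiv_localization_tensorProduct (φ : N ≃+ (Localization S ⊗[R] P))
    (hφ : ∀ (b : B) (z : Localization S) (v : P), φ (b • φ.symm (z ⊗ₜ v)) = z ⊗ₜ (b • v))
    (hP : ModuleFlat B P) : ModuleFlat B N := by
  let : Module R N := φ.module R
  let ψ : N ≃ₗ[R] Localization S ⊗[R] P := φ.linearEquiv R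
  have smul_symm (b : B) (z : Localization S) (v : P) :
      b • ψ.symm (z ⊗ₜ v) = ψ.symm (z ⊗ₜ (b • v)) :=
    ψ.eq_symm_apply.mpr (hφ b z v)
  have : SMulCommClass R B N := ⟨fun r b u => by
    obtain ⟨u, rfl⟩ := ψ.symm.surjective u
    induction u with
    | zero => simp only [map_zero, smul_zero]
    | tmul z v => simp only [smul_symm, ← map_smul, TensorProduct.smul_tmul']
    | add u₁ u₂ h₁ h₂ => simp only [map_add, smul_add, h₁, h₂]⟩
  exact of_isLocalizedModule S (ψ.symm.toLinearMap ∘ₗ TensorProduct.mk R (Localization S) P 1)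
    (fun b v => (smul_symm b 1 v).symm) hP

end Localization

end ModuleFlat

theorem smulCommClass_piAModule (A B : Type) [CommRing A] [Ring B] [Algebra A B] (I : Type)
    (M : I → Type) [∀ i, AddCommGroup (M i)] [∀ i, Module B (M i)] :
    letI : Module (I → A) (∀ i, M i) := piAModule A B I M
    SMulCommClass (I → A) B (∀ i, M i) := by
  let : Module (I → A) (∀ i, M i) := piAModule A B I M
  refine ⟨fun a b v => funext fun i => ?_⟩
  change algebraMap A B (a i) • b • v i = b • algebraMap A B (a i) • v i
  rw [smul_smul, smul_smul, Algebra.commutes]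

theorem stmt_6_general (A : Type) [CommRing A] (B : Type) [Ring B] [Algebra A B]
    (hB : IsUniformlyRightCoherent B) (I : Type) (S : Submonoid (I → A)) (M : I → Type)
    [∀ i, AddCommGroup (M i)] [∀ i, Module B (M i)] (hM : ∀ i, ModuleFlat B (M i)) :
    ModuleFlat (I → B) (∀ i, M i) ∧
    (letI : Module (I → A) (∀ i, M i) := piAModule A B I M
      ∀ (N : Type) [AddCommGroup N] [Module B N]
        (φ : N ≃+ (Localization S ⊗[I → A] (∀ i, M i))),
        (∀ (b : B) (z : Localization S) (m : ∀ i, M i),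
          φ (b • φ.symm (z ⊗ₜ m)) = z ⊗ₜ (fun i => b • m i)) →
        ModuleFlat B N) := by
  refine ⟨.pi hB hM, ?_⟩
  let : Module (I → A) (∀ i, M i) := piAModule A B I M
  have := smulCommClass_piAModule A B I M
  intro N _ _ φ hφ
  exact .of_addEquiv_localization_tensorProduct S φ hφ (.pi_diagonal hB.isRightCoherent hM)

theorem stmt_6
    (p : ℕ) (hp : p.Prime)
    (A : Type) [CommRing A] [Finite A] [IsLocalRing A] [CharP A p]
    (B : Type) [Ring B] [Algebra A B] [Finite B]
    (I : Type) (x : Ideal (I → A)) [x.IsPrime]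
    (C : I → ChainComplex (ModuleCat B) ℤ)
    (hflat : ∀ (i : I) (n : ℤ), ModuleFlat B ↥((C i).X n)) :
    -- the termwise product is a complex of flat `B_I`-modules
    (∀ n : ℤ, ModuleFlat (I → B) (∀ i, ↥((C i).X n))) ∧
    -- and every incarnation of a term of the ultraproduct `C(∞)` as a `B`-module is flat
    (∀ n : ℤ,
      letI : Module (I → A) (∀ i, ↥((C i).X n)) := piAModule A B I _
      ∀ (N : Type) [AddCommGroup N] [Module B N]
        (φ : N ≃+ (Localization.AtPrime x ⊗[I → A] (∀ i, ↥((C i).X n)))),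
        (∀ (b : B) (z : Localization.AtPrime x) (m : ∀ i, ↥((C i).X n)),
          φ (b • φ.symm (z ⊗ₜ m)) = z ⊗ₜ (fun i => b • m i)) →
        ModuleFlat B N) := by
  have general (n : ℤ) := stmt_6_general A B (.of_finite B) I x.primeCompl _ (hflat · n)
  exact ⟨fun n => (general n).1, fun n => (general n).2⟩
end
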